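/- arXiv:1912.08759 — 3 statements merged into one kernel-verified Lean document; each statement's English description precedes it below -/
import Mathlib

section
/- Let λ and μ be arbitrary nonnegative real numbers and let α, β be real numbers with α ≥ β ≥ 0. Then λ^α + μ^β ≥ 2^{-α} (λ + μ)^α whenever λ + μ < 1, and λ^α + μ^β ≥ 2^{-α} (λ + μ)^β whenever λ + μ ≥ 1. -/
/-!
With `s = l + m`, the lower bound is `2 ^ (-α) * min (s ^ α) (s ^ β)` in both regimes `s < 1` and
`1 ≤ s`. Since `s ≤ 2 * max l m`, the power of the larger of `l` and `m` dominates it on its own.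
-/

theorem rpow_neg_mul_rpow_le_rpow {c s x γ : ℝ} (hc : 0 < c) (hs : 0 ≤ s) (hsx : s ≤ c * x)
    (hγ : 0 ≤ γ) : c ^ (-γ) * s ^ γ ≤ x ^ γ :=
  calc
    c ^ (-γ) * s ^ γ = (c⁻¹ * s) ^ γ := by
      rw [Real.rpow_neg_eq_inv_rpow, Real.mul_rpow (inv_nonneg.2 hc.le) hs]
    _ ≤ x ^ γ :=
      Real.rpow_le_rpow (mul_nonneg (inv_nonneg.2 hc.le) hs) ((inv_mul_le_iff₀ hc).2 hsx) hγ

theorem rpow_neg_mul_min_rpow_le_max_rpow {c s x y α β : ℝ} (hc : 1 ≤ c) (hs : 0 ≤ s)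
    (hsxy : s ≤ c * max x y) (hβ : 0 ≤ β) (hαβ : β ≤ α) :
    c ^ (-α) * min (s ^ α) (s ^ β) ≤ max (x ^ α) (y ^ β) := by
  have hc₀ : 0 < c := zero_lt_one.trans_le hc
  rcases max_choice x y with hmax | hmax <;> rw [hmax] at hsxy
  · calc
      c ^ (-α) * min (s ^ α) (s ^ β) ≤ c ^ (-α) * s ^ α := by gcongr; exact min_le_left _ _
      _ ≤ x ^ α := rpow_neg_mul_rpow_le_rpow hc₀ hs hsxy (hβ.trans hαβ)
      _ ≤ max (x ^ α) (y ^ β) := le_max_left _ _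
  · calc
      c ^ (-α) * min (s ^ α) (s ^ β) ≤ c ^ (-α) * s ^ β := by gcongr; exact min_le_right _ _
      _ ≤ c ^ (-β) * s ^ β := by gcongr
      _ ≤ y ^ β := rpow_neg_mul_rpow_le_rpow hc₀ hs hsxy hβ
      _ ≤ max (x ^ α) (y ^ β) := le_max_right _ _

/-- Lemma 3.1 (first inequality): for nonnegative reals `l`, `m` and exponents
`α ≥ β ≥ 0`, one has `l^α + m^β ≥ 2^(-α) (l+m)^α` if `l+m < 1`, and
`l^α + m^β ≥ 2^(-α) (l+m)^β` if `l+m ≥ 1`.  Here `^` is the real power. -/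
theorem power_sum_lower_bound (l m α β : ℝ) (hl : 0 ≤ l) (hm : 0 ≤ m)
    (hβ : 0 ≤ β) (hαβ : β ≤ α) :
    (l + m < 1 → (2 : ℝ) ^ (-α) * (l + m) ^ α ≤ l ^ α + m ^ β) ∧
    (1 ≤ l + m → (2 : ℝ) ^ (-α) * (l + m) ^ β ≤ l ^ α + m ^ β) := by
  have hs : 0 ≤ l + m := add_nonneg hl hm
  have add_le_two_mul_max : l + m ≤ 2 * max l m := by
    rw [two_mul]
    exact add_le_add (le_max_left l m) (le_max_right l m)
  have min_bound : (2 : ℝ) ^ (-α) * min ((l + m) ^ α) ((l + m) ^ β) ≤ l ^ α + m ^ β :=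
    (rpow_neg_mul_min_rpow_le_max_rpow one_le_two hs add_le_two_mul_max hβ hαβ).trans
      (max_le_add_of_nonneg (Real.rpow_nonneg hl α) (Real.rpow_nonneg hm β))
  constructor
  · intro hlt
    rwa [min_eq_left (Real.rpow_le_rpow_of_exponent_ge' hs hlt.le hβ hαβ)] at min_bound
  · intro hge
    rwa [min_eq_right (Real.rpow_le_rpow_of_exponent_le hge hαβ)] at min_bound
end

section
/- Let n ≥ 1, let p be a real number with p ≥ 2, and let x, y be vectors in ℝⁿ. Then the inner product ⟨ |x|^{p-2} x − |y|^{p-2} y , x − y ⟩ is at least (2^{3-p}/p) · |x − y|^p, where |·| denotes the Euclidean norm. -/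
open RealInnerProductSpace

/-!
With `s = ‖x‖ + ‖y‖` and `d = ‖x - y‖`, polarization turns the pairing of `φ ‖x‖ • x - φ ‖y‖ • y`
with `x - y` into an expression in `‖x‖`, `‖y‖` and `d` alone. Multiplied by `s`, it exceeds
`(φ ‖x‖ * ‖x‖ + φ ‖y‖ * ‖y‖) * d ^ 2` by
`(φ ‖x‖ - φ ‖y‖) * (‖x‖ - ‖y‖) * (s ^ 2 - d ^ 2) / 2`,
which is nonnegative for monotone `φ`, since `d ≤ s`. For `φ t = t ^ (p - 2)` the first factor is
`‖x‖ ^ (p - 1) + ‖y‖ ^ (p - 1)`, and convexity bounds it below by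
`2 ^ (2 - p) * s ^ (p - 1) ≥ 2 ^ (2 - p) * d ^ (p - 2) * s`. Taking `y = -x` shows that the constant
`2 ^ (2 - p)` is optimal; it improves `2 ^ (3 - p) / p` by the factor `p / 2`.
-/

lemma two_rpow_mul_add_rpow_le {a b q : ℝ} (ha : 0 ≤ a) (hb : 0 ≤ b) (hq : 1 ≤ q) :
    (2 : ℝ) ^ (1 - q) * (a + b) ^ q ≤ a ^ q + b ^ q := by
  lift a to NNReal using ha
  lift b to NNReal using hb
  have h_mean : ((a : ℝ) + b) ^ q ≤ 2 ^ (q - 1) * ((a : ℝ) ^ q + (b : ℝ) ^ q) :=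
    mod_cast NNReal.rpow_add_le_mul_rpow_add_rpow a b hq
  rwa [← neg_sub, Real.rpow_neg zero_le_two, inv_mul_le_iff₀ (by positivity)]

lemma two_rpow_three_sub_div_le {p : ℝ} (hp : 2 ≤ p) :
    (2 : ℝ) ^ (3 - p) / p ≤ 2 ^ (2 - p) := by
  have h_exp : (2 : ℝ) ^ (3 - p) = 2 ^ (2 - p) * 2 := by
    rw [← Real.rpow_add_one two_ne_zero]
    ring_nf
  rw [h_exp, div_le_iff₀ (by positivity)]
  gcongr

section InnerProductSpace

variable {E : Type*} [NormedAddCommGroup E] [InnerProductSpace ℝ E]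

lemma norm_add_norm_mul_inner_smul_sub_smul_sub (α β : ℝ) (x y : E) :
    (‖x‖ + ‖y‖) * ⟪α • x - β • y, x - y⟫ =
      (α * ‖x‖ + β * ‖y‖) * ‖x - y‖ ^ 2 +
        (α - β) * (‖x‖ - ‖y‖) * ((‖x‖ + ‖y‖) ^ 2 - ‖x - y‖ ^ 2) / 2 := by
  rw [norm_sub_sq_real]
  simp only [inner_sub_left, inner_sub_right, real_inner_smul_left,
    real_inner_self_eq_norm_sq, real_inner_comm x y]
  ring

lemma mul_norm_sub_sq_le_mul_inner_of_monotoneOn {φ : ℝ → ℝ}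
    (hφ : MonotoneOn φ (Set.Ici 0)) (x y : E) :
    (φ ‖x‖ * ‖x‖ + φ ‖y‖ * ‖y‖) * ‖x - y‖ ^ 2 ≤
      (‖x‖ + ‖y‖) * ⟪φ ‖x‖ • x - φ ‖y‖ • y, x - y⟫ := by
  have h_mono : 0 ≤ (φ ‖x‖ - φ ‖y‖) * (‖x‖ - ‖y‖) :=
    (monovaryOn_id_iff.mpr hφ).sub_mul_sub_nonneg (norm_nonneg y) (norm_nonneg x)
  have h_sq : 0 ≤ (‖x‖ + ‖y‖) ^ 2 - ‖x - y‖ ^ 2 :=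
    sub_nonneg.mpr (pow_le_pow_left₀ (norm_nonneg _) (norm_sub_le x y) 2)
  rw [norm_add_norm_mul_inner_smul_sub_smul_sub]
  exact le_add_of_nonneg_right (by positivity)

theorem tartar_inequality_general {p : ℝ} (hp : 2 ≤ p) (x y : E) :
    (2 : ℝ) ^ (2 - p) * ‖x - y‖ ^ p ≤
      ⟪(‖x‖ ^ (p - 2)) • x - (‖y‖ ^ (p - 2)) • y, x - y⟫ := by
  rcases eq_or_ne x y with rfl | hxy
  · simp [Real.zero_rpow (show p ≠ 0 by linarith)]
  have hd : 0 < ‖x - y‖ := norm_sub_pos_iff.mpr hxy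
  have hds : ‖x - y‖ ≤ ‖x‖ + ‖y‖ := norm_sub_le x y
  have h_rpow {t : ℝ} (ht : 0 ≤ t) : t ^ (p - 1) = t ^ (p - 2) * t := by
    rw [← Real.rpow_add_one' ht (by linarith)]
    ring_nf
  have h_rpow_d : ‖x - y‖ ^ p = ‖x - y‖ ^ (p - 2) * ‖x - y‖ ^ 2 := by
    rw [← Real.rpow_add_natCast hd.ne']
    norm_num
  refine le_of_mul_le_mul_left ?_ (hd.trans_le hds)
  calc (‖x‖ + ‖y‖) * (2 ^ (2 - p) * ‖x - y‖ ^ p)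
      = 2 ^ (2 - p) * (‖x - y‖ ^ (p - 2) * (‖x‖ + ‖y‖)) * ‖x - y‖ ^ 2 := by rw [h_rpow_d]; ring
    _ ≤ 2 ^ (2 - p) * ((‖x‖ + ‖y‖) ^ (p - 2) * (‖x‖ + ‖y‖)) * ‖x - y‖ ^ 2 := by gcongr
    _ = 2 ^ (1 - (p - 1)) * (‖x‖ + ‖y‖) ^ (p - 1) * ‖x - y‖ ^ 2 := by
      rw [h_rpow (by positivity)]; ring_nf
    _ ≤ (‖x‖ ^ (p - 1) + ‖y‖ ^ (p - 1)) * ‖x - y‖ ^ 2 := by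
      gcongr
      exact two_rpow_mul_add_rpow_le (norm_nonneg x) (norm_nonneg y) (by linarith)
    _ = (‖x‖ ^ (p - 2) * ‖x‖ + ‖y‖ ^ (p - 2) * ‖y‖) * ‖x - y‖ ^ 2 := by
      rw [h_rpow (norm_nonneg x), h_rpow (norm_nonneg y)]
    _ ≤ (‖x‖ + ‖y‖) * ⟪(‖x‖ ^ (p - 2)) • x - (‖y‖ ^ (p - 2)) • y, x - y⟫ :=
      mul_norm_sub_sq_le_mul_inner_of_monotoneOn
        (Real.monotoneOn_rpow_Ici_of_exponent_nonneg (by linarith)) x y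

end InnerProductSpace

/-- Tartar's inequality (case `p ≥ 2`): for `x, y ∈ ℝⁿ`,
`⟨|x|^{p-2} x − |y|^{p-2} y, x − y⟩ ≥ (2^{3-p}/p) |x − y|^p`. -/
theorem tartar_inequality (n : ℕ) (hn : 1 ≤ n) (p : ℝ) (hp : 2 ≤ p)
    (x y : EuclideanSpace ℝ (Fin n)) :
    (2 : ℝ) ^ (3 - p) / p * ‖x - y‖ ^ p ≤
      ⟪(‖x‖ ^ (p - 2)) • x - (‖y‖ ^ (p - 2)) • y, x - y⟫ :=
  (mul_le_mul_of_nonneg_right (two_rpow_three_sub_div_le hp) (by positivity)).trans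
    (tartar_inequality_general hp x y)
end

section
/- Let n ≥ 1 and let p⁺ ≥ 2 be a real number. Then for every real number p with 2 ≤ p ≤ p⁺ and all vectors x, y ∈ ℝⁿ with |x| ≤ 1 and |y| ≤ 1, one has | |x|^{p-2} x − |y|^{p-2} y | ≤ (p⁺ − 1) · |x − y|, where |·| denotes the Euclidean norm. -/
/-!
If `‖y‖ ≤ ‖x‖`, split
`‖x‖ ^ q • x - ‖y‖ ^ q • y = ‖x‖ ^ q • (x - y) + (‖x‖ ^ q - ‖y‖ ^ q) • y`.
The second summand has norm `(‖x‖ ^ q - ‖y‖ ^ q) * ‖y‖`, which the tangent line of the convex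
function `t ↦ t ^ (q + 1)` at `‖x‖` bounds by `q * ‖x‖ ^ q * (‖x‖ - ‖y‖)`.
-/

theorem rpow_add_one_add_mul_sub_le_rpow_add_one {a b q : ℝ} (ha : 0 ≤ a) (hb : 0 ≤ b)
    (hq : 0 ≤ q) : a ^ (q + 1) + (q + 1) * a ^ q * (b - a) ≤ b ^ (q + 1) := by
  obtain rfl | ha := ha.eq_or_lt
  · obtain rfl | hq := hq.eq_or_lt
    · simp
    · simpa [Real.zero_rpow hq.ne', Real.zero_rpow (by positivity : q + 1 ≠ 0)] using
        Real.rpow_nonneg hb (q + 1)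
  have bernoulli : 1 + (q + 1) * (b / a - 1) ≤ (b / a) ^ (q + 1) := by
    have hba : -1 ≤ b / a - 1 := by linarith [div_nonneg hb ha.le]
    simpa using one_add_mul_self_le_rpow_one_add hba (by linarith : 1 ≤ q + 1)
  calc a ^ (q + 1) + (q + 1) * a ^ q * (b - a)
      = a ^ (q + 1) * (1 + (q + 1) * (b / a - 1)) := by
        rw [Real.rpow_add_one ha.ne']
        field_simp
    _ ≤ a ^ (q + 1) * (b / a) ^ (q + 1) := by gcongr
    _ = b ^ (q + 1) := by
        rw [← Real.mul_rpow ha.le (div_nonneg hb ha.le), mul_div_cancel₀ _ ha.ne']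

theorem rpow_sub_rpow_mul_le {a b q : ℝ} (ha : 0 ≤ a) (hb : 0 ≤ b) (hq : 0 ≤ q) :
    (a ^ q - b ^ q) * b ≤ q * a ^ q * (a - b) := by
  have tangent := rpow_add_one_add_mul_sub_le_rpow_add_one ha hb hq
  have hq' : q + 1 ≠ 0 := by positivity
  rw [Real.rpow_add_one' ha hq', Real.rpow_add_one' hb hq'] at tangent
  linarith

section SeminormedSpace

variable {E : Type*} [SeminormedAddCommGroup E] [NormedSpace ℝ E] {x y : E}

theorem norm_rpow_smul_sub_rpow_smul_le_of_norm_le {q : ℝ} (hq : 0 ≤ q) (hyx : ‖y‖ ≤ ‖x‖) :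
    ‖‖x‖ ^ q • x - ‖y‖ ^ q • y‖ ≤ (q + 1) * ‖x‖ ^ q * ‖x - y‖ := by
  have hpow : 0 ≤ ‖x‖ ^ q - ‖y‖ ^ q := sub_nonneg.2 (by gcongr)
  calc ‖‖x‖ ^ q • x - ‖y‖ ^ q • y‖
      = ‖‖x‖ ^ q • (x - y) + (‖x‖ ^ q - ‖y‖ ^ q) • y‖ := by
        congr 1
        module
    _ ≤ ‖‖x‖ ^ q • (x - y)‖ + ‖(‖x‖ ^ q - ‖y‖ ^ q) • y‖ := norm_add_le _ _
    _ = ‖x‖ ^ q * ‖x - y‖ + (‖x‖ ^ q - ‖y‖ ^ q) * ‖y‖ := by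
        rw [norm_smul_of_nonneg (by positivity), norm_smul_of_nonneg hpow]
    _ ≤ ‖x‖ ^ q * ‖x - y‖ + q * ‖x‖ ^ q * (‖x‖ - ‖y‖) := by
        gcongr _ + ?_
        exact rpow_sub_rpow_mul_le (norm_nonneg x) (norm_nonneg y) hq
    _ ≤ ‖x‖ ^ q * ‖x - y‖ + q * ‖x‖ ^ q * ‖x - y‖ := by
        gcongr
        exact norm_sub_norm_le x y
    _ = (q + 1) * ‖x‖ ^ q * ‖x - y‖ := by ring

theorem norm_rpow_smul_sub_rpow_smul_le {q : ℝ} (hq : 0 ≤ q) (x y : E) :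
    ‖‖x‖ ^ q • x - ‖y‖ ^ q • y‖ ≤ (q + 1) * max ‖x‖ ‖y‖ ^ q * ‖x - y‖ := by
  rcases le_total ‖y‖ ‖x‖ with hyx | hxy
  · rw [max_eq_left hyx]
    exact norm_rpow_smul_sub_rpow_smul_le_of_norm_le hq hyx
  · rw [max_eq_right hxy, norm_sub_rev, norm_sub_rev x y]
    exact norm_rpow_smul_sub_rpow_smul_le_of_norm_le hq hxy

theorem power_map_lipschitz_on_unit_ball_general {p : ℝ} (hp : 2 ≤ p) (hx : ‖x‖ ≤ 1)
    (hy : ‖y‖ ≤ 1) :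
    ‖‖x‖ ^ (p - 2) • x - ‖y‖ ^ (p - 2) • y‖ ≤ (p - 1) * ‖x - y‖ := by
  have hq : 0 ≤ p - 2 := sub_nonneg.2 hp
  have hmax : max ‖x‖ ‖y‖ ^ (p - 2) ≤ 1 :=
    Real.rpow_le_one (le_max_of_le_left (norm_nonneg x)) (max_le hx hy) hq
  calc ‖‖x‖ ^ (p - 2) • x - ‖y‖ ^ (p - 2) • y‖
      ≤ (p - 2 + 1) * max ‖x‖ ‖y‖ ^ (p - 2) * ‖x - y‖ := norm_rpow_smul_sub_rpow_smul_le hq x y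
    _ ≤ (p - 2 + 1) * 1 * ‖x - y‖ := by gcongr
    _ = (p - 1) * ‖x - y‖ := by ring

end SeminormedSpace

/-- Local Lipschitz estimate for `z ↦ |z|^{p-2} z` on the closed unit ball of `ℝⁿ`,
uniform over exponents `p ∈ [2, p⁺]`. -/
theorem power_map_lipschitz_on_unit_ball (n : ℕ) (hn : 1 ≤ n) (pplus : ℝ)
    (hpplus : 2 ≤ pplus) (p : ℝ) (hp : 2 ≤ p) (hppp : p ≤ pplus)
    (x y : EuclideanSpace ℝ (Fin n)) (hx : ‖x‖ ≤ 1) (hy : ‖y‖ ≤ 1) :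
    ‖(‖x‖ ^ (p - 2)) • x - (‖y‖ ^ (p - 2)) • y‖ ≤ (pplus - 1) * ‖x - y‖ :=
  (power_map_lipschitz_on_unit_ball_general hp hx hy).trans (by gcongr)
end
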